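/- arXiv:math/0006147 — 2 statements merged into one kernel-verified Lean document; each statement's English description precedes it below -/
import Mathlib

section
/- Let U ⊆ ℂ be open and let μ, h, v : U → ℂ be smooth. Then D_h(∂̄_μ^{(−1)} v) − ∂̄_μ^{(2)}(D_h v) = L_v(D_h μ − ∂̄h) on U, where L_v q = v·∂q + 2·(∂v)·q is the Lie derivative acting on weight-2 quantities. Explicitly: (∂³ + 2h∂ + (∂h))(∂̄v − μ∂v + (∂μ)v) − (∂̄ − μ∂ − 2(∂μ))(∂³v + 2h∂v + (∂h)v) = v·∂(D_h μ − ∂̄h) + 2(∂v)·(D_h μ − ∂̄h). -/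
/-!
On functions that are smooth on the open set `U`, the operators `wd` and `wdbar` are commuting
derivations (`wd_mul`, `wdbar_mul`, `wdbar_wd`; commutation is the symmetry of the second real
derivative) which depend only on the values on `U` (`wd_congr`, `wdbar_congr`) and preserve
smoothness. The identity is then one of differential algebra. Writing `'` for `∂`, the `v`-terms
free of `μ` leave only `-2(∂̄h)v' - (∂̄h)'v = -L_v(∂̄h)`, and with `w = μ'v - μv'` one has
`w' = μ''v - μv''`, `w'' = μ'''v + μ''v' - μ'v'' - μv'''`,
`w''' = μ''''v + 2μ'''v' - 2μ'v''' - μv''''`, so that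
`D_h w + μ(D_h v)' + 2μ' D_h v` collapses to `L_v(D_h μ)`.
-/

open Complex MeasureTheory

/-- The Wirtinger derivative ∂u = (u_x − i·u_y)/2 of a function `u : ℂ → ℂ`. -/
noncomputable def wd (u : ℂ → ℂ) : ℂ → ℂ :=
  fun z => (fderiv ℝ u z 1 - Complex.I * fderiv ℝ u z Complex.I) / 2

/-- The conjugate Wirtinger derivative ∂̄u = (u_x + i·u_y)/2. -/
noncomputable def wdbar (u : ℂ → ℂ) : ℂ → ℂ :=
  fun z => (fderiv ℝ u z 1 + Complex.I * fderiv ℝ u z Complex.I) / 2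

/-- The Schwarzian derivative {f,z} = ∂³f/∂f − (3/2)·(∂²f/∂f)² of a smooth map. -/
noncomputable def schwarz (f : ℂ → ℂ) : ℂ → ℂ :=
  fun z => wd (wd (wd f)) z / wd f z - (3/2) * (wd (wd f) z / wd f z)^2

/-- The Schwarzian derivative S(g) = g'''/g' − (3/2)·(g''/g')² of a holomorphic map. -/
noncomputable def schwarzD (g : ℂ → ℂ) : ℂ → ℂ :=
  fun z => deriv (deriv (deriv g)) z / deriv g z - (3/2) * (deriv (deriv g) z / deriv g z)^2

/-- The operator ∂̄_μ^{(k)} u = ∂̄u − μ·∂u − k·(∂μ)·u. -/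
noncomputable def dbarMu (μ : ℂ → ℂ) (k : ℤ) (u : ℂ → ℂ) : ℂ → ℂ :=
  fun z => wdbar u z - μ z * wd u z - (k : ℂ) * wd μ z * u z

/-- The third-order operator D_h u = ∂³u + 2h·∂u + (∂h)·u. -/
noncomputable def Dop (h u : ℂ → ℂ) : ℂ → ℂ :=
  fun z => wd (wd (wd u)) z + 2 * h z * wd u z + wd h z * u z

/-- The Lie derivative on weight-2 quantities: L_v q = v·∂q + 2·(∂v)·q. -/
noncomputable def lieD (v q : ℂ → ℂ) : ℂ → ℂ :=
  fun z => v z * wd q z + 2 * wd v z * q z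

section Wirtinger

variable {U : Set ℂ} {f g : ℂ → ℂ} {z : ℂ}

lemma wd_congr (hU : IsOpen U) (hfg : Set.EqOn f g U) : Set.EqOn (wd f) (wd g) U := by
  intro z hz
  have := (hfg.eventuallyEq_of_mem (hU.mem_nhds hz)).fderiv_eq (𝕜 := ℝ)
  simp only [wd, this]

lemma wdbar_congr (hU : IsOpen U) (hfg : Set.EqOn f g U) : Set.EqOn (wdbar f) (wdbar g) U := by
  intro z hz
  have := (hfg.eventuallyEq_of_mem (hU.mem_nhds hz)).fderiv_eq (𝕜 := ℝ)
  simp only [wdbar, this]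

lemma wd_const (c : ℂ) : wd (fun _ => c) z = 0 := by simp [wd]

lemma wdbar_const (c : ℂ) : wdbar (fun _ => c) z = 0 := by simp [wdbar]

lemma wd_add (hf : DifferentiableAt ℝ f z) (hg : DifferentiableAt ℝ g z) :
    wd (fun w => f w + g w) z = wd f z + wd g z := by
  simp only [wd, fderiv_fun_add hf hg, add_apply]; ring

lemma wdbar_add (hf : DifferentiableAt ℝ f z) (hg : DifferentiableAt ℝ g z) :
    wdbar (fun w => f w + g w) z = wdbar f z + wdbar g z := by
  simp only [wdbar, fderiv_fun_add hf hg, add_apply]; ring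

lemma wd_sub (hf : DifferentiableAt ℝ f z) (hg : DifferentiableAt ℝ g z) :
    wd (fun w => f w - g w) z = wd f z - wd g z := by
  simp only [wd, fderiv_fun_sub hf hg, sub_apply]; ring

lemma wd_mul (hf : DifferentiableAt ℝ f z) (hg : DifferentiableAt ℝ g z) :
    wd (fun w => f w * g w) z = wd f z * g z + f z * wd g z := by
  simp only [wd, fderiv_fun_mul hf hg, add_apply, smul_apply, smul_eq_mul]; ring

lemma wdbar_mul (hf : DifferentiableAt ℝ f z) (hg : DifferentiableAt ℝ g z) :
    wdbar (fun w => f w * g w) z = wdbar f z * g z + f z * wdbar g z := by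
  simp only [wdbar, fderiv_fun_mul hf hg, add_apply, smul_apply, smul_eq_mul]; ring

lemma contDiffOn_fderiv_apply (hU : IsOpen U) (hf : ContDiffOn ℝ (⊤ : ℕ∞) f U) (a : ℂ) :
    ContDiffOn ℝ (⊤ : ℕ∞) (fun z => fderiv ℝ f z a) U :=
  (hf.fderiv_of_isOpen hU (by simp)).clm_apply contDiffOn_const

lemma contDiffOn_wd (hU : IsOpen U) (hf : ContDiffOn ℝ (⊤ : ℕ∞) f U) :
    ContDiffOn ℝ (⊤ : ℕ∞) (wd f) U :=
  ((contDiffOn_fderiv_apply hU hf 1).sub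
    (contDiffOn_const.mul (contDiffOn_fderiv_apply hU hf I))).div_const 2

lemma contDiffOn_wdbar (hU : IsOpen U) (hf : ContDiffOn ℝ (⊤ : ℕ∞) f U) :
    ContDiffOn ℝ (⊤ : ℕ∞) (wdbar f) U :=
  ((contDiffOn_fderiv_apply hU hf 1).add
    (contDiffOn_const.mul (contDiffOn_fderiv_apply hU hf I))).div_const 2

lemma differentiableAt_of_smooth (hU : IsOpen U) (hf : ContDiffOn ℝ (⊤ : ℕ∞) f U) (hz : z ∈ U) :
    DifferentiableAt ℝ f z :=
  (hf.contDiffAt (hU.mem_nhds hz)).differentiableAt (by simp)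

/-- `∂̄∂ = ∂∂̄` on smooth functions, by symmetry of the second real derivative. -/
lemma wdbar_wd (hU : IsOpen U) (hf : ContDiffOn ℝ (⊤ : ℕ∞) f U) :
    Set.EqOn (wdbar (wd f)) (wd (wdbar f)) U := by
  intro z hz
  have h1 := differentiableAt_of_smooth hU (contDiffOn_fderiv_apply hU hf 1) hz
  have hI := differentiableAt_of_smooth hU (contDiffOn_fderiv_apply hU hf I) hz
  have hIm := hI.const_mul I
  have hd : DifferentiableAt ℝ (fderiv ℝ f) z :=
    ((hf.fderiv_of_isOpen hU (m := (⊤ : ℕ∞)) (by simp)).contDiffAt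
      (hU.mem_nhds hz)).differentiableAt (by simp)
  have happ (a b : ℂ) : fderiv ℝ (fun w => fderiv ℝ f w a) z b = fderiv ℝ (fderiv ℝ f) z b a := by
    rw [fderiv_clm_apply hd (differentiableAt_const a)]; simp
  have hsymm : fderiv ℝ (fderiv ℝ f) z 1 I = fderiv ℝ (fderiv ℝ f) z I 1 :=
    ((hf.contDiffAt (hU.mem_nhds hz)).isSymmSndFDerivAt
      (by simpa using WithTop.coe_le_coe.2 (le_top : (2 : ℕ∞) ≤ ⊤))).eq 1 I
  have e1 : fderiv ℝ (wd f) z = (2 : ℂ)⁻¹ • (fderiv ℝ (fun w => fderiv ℝ f w 1) z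
      - I • fderiv ℝ (fun w => fderiv ℝ f w I) z) := by
    rw [← fderiv_const_mul hI, ← fderiv_fun_sub h1 hIm, ← fderiv_const_mul (h1.fun_sub hIm)]
    congr 1; funext w; simp only [wd]; ring
  have e2 : fderiv ℝ (wdbar f) z = (2 : ℂ)⁻¹ • (fderiv ℝ (fun w => fderiv ℝ f w 1) z
      + I • fderiv ℝ (fun w => fderiv ℝ f w I) z) := by
    rw [← fderiv_const_mul hI, ← fderiv_fun_add h1 hIm, ← fderiv_const_mul (h1.fun_add hIm)]
    congr 1; funext w; simp only [wdbar]; ring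
  simp only [wdbar.eq_1 (wd f), wd.eq_1 (wdbar f), e1, e2, add_apply, sub_apply, smul_apply,
    smul_eq_mul, happ, hsymm]
  ring

end Wirtinger

/-- `D_h(∂̄_μ^{(−1)} v) − ∂̄_μ^{(2)}(D_h v) = L_v(D_h μ − ∂̄h)` on `U`. -/
theorem stmt2 (U : Set ℂ) (hU : IsOpen U) (μ h v : ℂ → ℂ)
    (hμ : ContDiffOn ℝ (⊤ : ℕ∞) μ U) (hh : ContDiffOn ℝ (⊤ : ℕ∞) h U) (hv : ContDiffOn ℝ (⊤ : ℕ∞) v U) :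
    ∀ z ∈ U,
      Dop h (dbarMu μ (-1) v) z - dbarMu μ 2 (Dop h v) z
        = lieD v (fun w => Dop h μ w - wdbar h w) z := by
  have S {f : ℂ → ℂ} := contDiffOn_wd (f := f) hU
  have B {f : ℂ → ℂ} := contDiffOn_wdbar (f := f) hU
  have D {f : ℂ → ℂ} (hf : ContDiffOn ℝ (⊤ : ℕ∞) f U) : ∀ z ∈ U, DifferentiableAt ℝ f z :=
    fun z hz => differentiableAt_of_smooth hU hf hz
  have m0 := D hμ
  have m1 := D (S hμ)
  have m2 := D (S (S hμ))
  have m3 := D (S (S (S hμ)))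
  have v0 := D hv
  have v1 := D (S hv)
  have v2 := D (S (S hv))
  have v3 := D (S (S (S hv)))
  have b0 := D (B hv)
  have b1 := D (S (B hv))
  have b2 := D (S (S (B hv)))
  have h0 := D hh
  have h1 := D (S hh)
  have hb := D (B hh)
  -- The first three `∂`-derivatives of `w = ∂̄v - μ ∂v + (∂μ) v`.
  have w1 : Set.EqOn (wd (dbarMu μ (-1) v))
      (fun z => wd (wdbar v) z - μ z * wd (wd v) z + wd (wd μ) z * v z) U := by
    intro z hz
    specialize m0 z hz; specialize m1 z hz; specialize v0 z hz; specialize v1 z hz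
    specialize b0 z hz
    unfold dbarMu
    simp (disch := fun_prop) only [wd_sub, wd_mul, wd_const]
    push_cast; ring
  have w2 : Set.EqOn (wd (wd (dbarMu μ (-1) v)))
      (fun z => wd (wd (wdbar v)) z - wd μ z * wd (wd v) z - μ z * wd (wd (wd v)) z
        + wd (wd (wd μ)) z * v z + wd (wd μ) z * wd v z) U := by
    intro z hz
    rw [wd_congr hU w1 hz]
    specialize m0 z hz; specialize m2 z hz; specialize v0 z hz; specialize v2 z hz
    specialize b1 z hz
    simp (disch := fun_prop) only [wd_add, wd_sub, wd_mul]
    ring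
  have w3 : Set.EqOn (wd (wd (wd (dbarMu μ (-1) v))))
      (fun z => wd (wd (wd (wdbar v))) z - 2 * wd μ z * wd (wd (wd v)) z
        - μ z * wd (wd (wd (wd v))) z + wd (wd (wd (wd μ))) z * v z
        + 2 * wd (wd (wd μ)) z * wd v z) U := by
    intro z hz
    rw [wd_congr hU w2 hz]
    specialize m0 z hz; specialize m1 z hz; specialize m2 z hz; specialize m3 z hz
    specialize v0 z hz; specialize v1 z hz; specialize v2 z hz; specialize v3 z hz
    specialize b2 z hz
    simp (disch := fun_prop) only [wd_add, wd_sub, wd_mul]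
    ring
  have c1 := wdbar_wd hU hv
  have c3 : Set.EqOn (wdbar (wd (wd (wd v)))) (wd (wd (wd (wdbar v)))) U :=
    (wdbar_wd hU (S (S hv))).trans
      (wd_congr hU ((wdbar_wd hU (S hv)).trans (wd_congr hU c1)))
  have ch := wdbar_wd hU hh
  intro z hz
  have e1 := w1 hz
  have e3 := w3 hz
  specialize c1 hz; specialize c3 hz; specialize ch hz
  specialize m0 z hz; specialize m1 z hz; specialize m3 z hz
  specialize v0 z hz; specialize v1 z hz; specialize v3 z hz
  specialize h0 z hz; specialize h1 z hz; specialize hb z hz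
  simp only [Dop.eq_1 h (dbarMu μ (-1) v), e1, e3]
  unfold lieD dbarMu Dop
  simp (disch := fun_prop) only [wd_add, wd_sub, wd_mul, wd_const, wdbar_add, wdbar_mul,
    wdbar_const, c1, c3, ch]
  push_cast; ring
end

section
/- Let U, U' ⊆ ℂ be open, g : U → U' a biholomorphism, V, V' ⊆ ℂ open, G : V → V' a biholomorphism, and let f₂ : U → V and f₁ : U' → V' be smooth with nowhere-vanishing Wirtinger derivatives satisfying f₁∘g = G∘f₂ on U. Let h₁ : U' → ℂ be smooth and set h₂ = (h₁∘g)·(g')² + S(g) on U. Then the push-forward densities h̃₁ = h₁ − {f₁,z} and h̃₂ = h₂ − {f₂,z} satisfy h̃₂ − (h̃₁∘g)·(g')² = (S(G)∘f₂)·(∂f₂)² on U; i.e., the push-forward of the projective connection h by the deformation map transforms as a projective connection on the deformed surface. -/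
/-!
The Wirtinger derivative `∂` obeys the Leibniz rule, and it obeys a one-term chain rule when either
the inner or the outer function of a composition is holomorphic: `∂(f ∘ g) = (∂f ∘ g) · g'` and
`∂(G ∘ f) = (G' ∘ f) · ∂f`. Hence the usual cocycle identity of the Schwarzian derivative holds in
both mixed situations (`schwarz_comp_right`, `schwarz_comp_left`):
`{f ∘ g, z} = ({f, ·} ∘ g) · (g')² + S(g)` and `{G ∘ f, z} = (S(G) ∘ f) · (∂f)² + {f, z}`.
Both apply to the single function `f₁ ∘ g = G ∘ f₂` on `U`; equating the two expressions, and adding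
the transformation law of `h`, gives the claim.
-/

open Complex MeasureTheory

section Wirtinger

lemma wd_congr_s16 {U : Set ℂ} (hU : IsOpen U) {u v : ℂ → ℂ} (h : ∀ z ∈ U, u z = v z) :
    ∀ z ∈ U, wd u z = wd v z := by
  intro z hz
  have : u =ᶠ[nhds z] v := Filter.eventually_of_mem (hU.mem_nhds hz) h
  simp only [wd, this.fderiv_eq]

lemma schwarz_congr {U : Set ℂ} (hU : IsOpen U) {u v : ℂ → ℂ} (h : ∀ z ∈ U, u z = v z) :
    ∀ z ∈ U, schwarz u z = schwarz v z := by
  intro z hz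
  have e1 := wd_congr_s16 hU h
  have e2 := wd_congr_s16 hU e1
  have e3 := wd_congr_s16 hU e2
  simp only [schwarz, e1 z hz, e2 z hz, e3 z hz]

lemma wd_contDiffOn {U : Set ℂ} (hU : IsOpen U) {u : ℂ → ℂ}
    (hu : ContDiffOn ℝ (⊤ : ℕ∞) u U) : ContDiffOn ℝ (⊤ : ℕ∞) (wd u) U := by
  have h : ContDiffOn ℝ (⊤ : ℕ∞) (fderiv ℝ u) U := hu.fderiv_of_isOpen hU (by simp)
  have h1 : ContDiffOn ℝ (⊤ : ℕ∞) (fun z => fderiv ℝ u z 1) U := h.clm_apply contDiffOn_const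
  have h2 : ContDiffOn ℝ (⊤ : ℕ∞) (fun z => fderiv ℝ u z Complex.I) U :=
    h.clm_apply contDiffOn_const
  exact (h1.sub (contDiffOn_const.mul h2)).div_const 2

lemma ContDiffOn.differentiableAt_real {U : Set ℂ} (hU : IsOpen U) {u : ℂ → ℂ}
    (hu : ContDiffOn ℝ (⊤ : ℕ∞) u U) {z : ℂ} (hz : z ∈ U) : DifferentiableAt ℝ u z :=
  (hu.differentiableOn (by simp)).differentiableAt (hU.mem_nhds hz)

lemma wd_mul_s16 {u v : ℂ → ℂ} {z : ℂ} (hu : DifferentiableAt ℝ u z) (hv : DifferentiableAt ℝ v z) :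
    wd (fun z => u z * v z) z = wd u z * v z + u z * wd v z := by
  simp only [wd, fderiv_fun_mul hu hv, add_apply, smul_apply, smul_eq_mul]
  ring

lemma wd_add_s16 {u v : ℂ → ℂ} {z : ℂ} (hu : DifferentiableAt ℝ u z) (hv : DifferentiableAt ℝ v z) :
    wd (fun z => u z + v z) z = wd u z + wd v z := by
  simp only [wd, fderiv_fun_add hu hv, add_apply]
  ring

/-- The real derivative of a holomorphic function is multiplication by its complex derivative. -/
lemma fderiv_real_apply {g : ℂ → ℂ} {z : ℂ} (hg : DifferentiableAt ℂ g z) (v : ℂ) :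
    fderiv ℝ g z v = v * deriv g z := by
  rw [hg.fderiv_restrictScalars ℝ, ContinuousLinearMap.coe_restrictScalars',
    fderiv_eq_smul_deriv, smul_eq_mul]

lemma wd_eq_deriv {g : ℂ → ℂ} {z : ℂ} (hg : DifferentiableAt ℂ g z) : wd g z = deriv g z := by
  simp only [wd, fderiv_real_apply hg]
  linear_combination (-(deriv g z) / 2) * Complex.I_mul_I

/-- Chain rule for a holomorphic inner function. With `c = g'`, real linearity of `Df` at `g z`
reduces the claim to `Df(c) - i Df(ic) = (Df(1) - i Df(i)) c`. -/
lemma wd_comp_right {f g : ℂ → ℂ} {z : ℂ} (hf : DifferentiableAt ℝ f (g z))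
    (hg : DifferentiableAt ℂ g z) :
    wd (fun z => f (g z)) z = wd f (g z) * deriv g z := by
  have hc : fderiv ℝ (fun z => f (g z)) z = (fderiv ℝ f (g z)).comp (fderiv ℝ g z) :=
    fderiv_comp z hf (hg.restrictScalars ℝ)
  have key : ∀ w : ℂ, fderiv ℝ f (g z) w
      = w.re * fderiv ℝ f (g z) 1 + w.im * fderiv ℝ f (g z) Complex.I := by
    intro w
    have hw : w = w.re • (1 : ℂ) + w.im • Complex.I := by
      simp [Complex.re_add_im]
    conv_lhs => rw [hw]
    rw [map_add, map_smul, map_smul, Complex.real_smul, Complex.real_smul]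
  simp only [wd, hc, ContinuousLinearMap.comp_apply, fderiv_real_apply hg]
  rw [key (1 * deriv g z), key (Complex.I * deriv g z)]
  simp only [one_mul, Complex.I_mul_re, Complex.I_mul_im]
  push_cast
  have h := Complex.re_add_im (deriv g z)
  generalize fderiv ℝ f (g z) 1 = a
  generalize fderiv ℝ f (g z) Complex.I = b
  generalize ((deriv g z).re : ℂ) = x at *
  generalize ((deriv g z).im : ℂ) = y at *
  rw [← h]
  linear_combination (b * y / 2) * Complex.I_mul_I

/-- Chain rule for a holomorphic outer function. -/
lemma wd_comp_left {f G : ℂ → ℂ} {z : ℂ} (hf : DifferentiableAt ℝ f z)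
    (hG : DifferentiableAt ℂ G (f z)) :
    wd (fun z => G (f z)) z = deriv G (f z) * wd f z := by
  have hc : fderiv ℝ (fun z => G (f z)) z = (fderiv ℝ G (f z)).comp (fderiv ℝ f z) :=
    fderiv_comp z (hG.restrictScalars ℝ) hf
  simp only [wd, hc, ContinuousLinearMap.comp_apply, fderiv_real_apply hG]
  ring

/-- Combined Leibniz and chain rule for the terms occurring when `f ∘ g` is differentiated
repeatedly, with `g` and `b` holomorphic. -/
lemma wd_comp_right_mul {a g b : ℂ → ℂ} {z : ℂ} (ha : DifferentiableAt ℝ a (g z))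
    (hg : DifferentiableAt ℂ g z) (hb : DifferentiableAt ℂ b z) :
    wd (fun z => a (g z) * b z) z = wd a (g z) * deriv g z * b z + a (g z) * deriv b z := by
  rw [wd_mul_s16 (u := fun z => a (g z)) (ha.comp z (hg.restrictScalars ℝ)) (hb.restrictScalars ℝ),
    wd_comp_right ha hg, wd_eq_deriv hb]

/-- Combined Leibniz and chain rule for the terms occurring when `G ∘ f` is differentiated
repeatedly, with `A` holomorphic. -/
lemma wd_comp_left_mul {A f c : ℂ → ℂ} {z : ℂ} (hA : DifferentiableAt ℂ A (f z))
    (hf : DifferentiableAt ℝ f z) (hc : DifferentiableAt ℝ c z) :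
    wd (fun z => A (f z) * c z) z = deriv A (f z) * wd f z * c z + A (f z) * wd c z := by
  rw [wd_mul_s16 (u := fun z => A (f z)) ((hA.restrictScalars ℝ).comp z hf) hc, wd_comp_left hf hA]

/-- Schwarzian cocycle identity for a smooth function precomposed with a holomorphic one. -/
lemma schwarz_comp_right {U U' : Set ℂ} (hU : IsOpen U) (hU' : IsOpen U') {f g : ℂ → ℂ}
    (hg : DifferentiableOn ℂ g U) (hmaps : Set.MapsTo g U U') (hg' : ∀ z ∈ U, deriv g z ≠ 0)
    (hf : ContDiffOn ℝ (⊤ : ℕ∞) f U') (hf' : ∀ w ∈ U', wd f w ≠ 0) :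
    ∀ z ∈ U, schwarz (fun z => f (g z)) z
      = schwarz f (g z) * (deriv g z) ^ 2 + schwarzD g z := by
  have hf1 := wd_contDiffOn hU' hf
  have hf2 := wd_contDiffOn hU' hf1
  have hd1 := hg.deriv hU
  have hd2 := hd1.deriv hU
  have dg : ∀ z ∈ U, DifferentiableAt ℂ g z := fun z hz => hg.differentiableAt (hU.mem_nhds hz)
  have dg1 : ∀ z ∈ U, DifferentiableAt ℂ (deriv g) z :=
    fun z hz => hd1.differentiableAt (hU.mem_nhds hz)
  have dg2 : ∀ z ∈ U, DifferentiableAt ℂ (deriv (deriv g)) z :=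
    fun z hz => hd2.differentiableAt (hU.mem_nhds hz)
  have df : ∀ z ∈ U, DifferentiableAt ℝ f (g z) :=
    fun z hz => hf.differentiableAt_real hU' (hmaps hz)
  have df1 : ∀ z ∈ U, DifferentiableAt ℝ (wd f) (g z) :=
    fun z hz => hf1.differentiableAt_real hU' (hmaps hz)
  have df2 : ∀ z ∈ U, DifferentiableAt ℝ (wd (wd f)) (g z) :=
    fun z hz => hf2.differentiableAt_real hU' (hmaps hz)
  have e1 : ∀ z ∈ U, wd (fun z => f (g z)) z = wd f (g z) * deriv g z :=
    fun z hz => wd_comp_right (df z hz) (dg z hz)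
  have e2 : ∀ z ∈ U, wd (wd (fun z => f (g z))) z
      = wd (wd f) (g z) * (deriv g z * deriv g z) + wd f (g z) * deriv (deriv g) z := by
    intro z hz
    rw [wd_congr_s16 hU e1 z hz, wd_comp_right_mul (df1 z hz) (dg z hz) (dg1 z hz)]
    ring
  have e3 : ∀ z ∈ U, wd (wd (wd (fun z => f (g z)))) z
      = wd (wd (wd f)) (g z) * deriv g z ^ 3 + 3 * wd (wd f) (g z) * deriv g z * deriv (deriv g) z
        + wd f (g z) * deriv (deriv (deriv g)) z := by
    intro z hz
    have hsq : DifferentiableAt ℂ (fun z => deriv g z * deriv g z) z := (dg1 z hz).mul (dg1 z hz)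
    have hgR := (dg z hz).restrictScalars ℝ
    rw [wd_congr_s16 hU e2 z hz,
      wd_add_s16 (u := fun z => wd (wd f) (g z) * (deriv g z * deriv g z))
        (v := fun z => wd f (g z) * deriv (deriv g) z)
        (((df2 z hz).comp z hgR).mul (hsq.restrictScalars ℝ))
        (((df1 z hz).comp z hgR).mul ((dg2 z hz).restrictScalars ℝ)),
      wd_comp_right_mul (b := fun z => deriv g z * deriv g z) (df2 z hz) (dg z hz) hsq,
      wd_comp_right_mul (df1 z hz) (dg z hz) (dg2 z hz),
      deriv_fun_mul (dg1 z hz) (dg1 z hz)]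
    ring
  intro z hz
  have n1 := hg' z hz
  have n2 := hf' _ (hmaps hz)
  simp only [schwarz, schwarzD, e1 z hz, e2 z hz, e3 z hz]
  field_simp
  ring

/-- Schwarzian cocycle identity for a smooth function postcomposed with a holomorphic one. -/
lemma schwarz_comp_left {U V : Set ℂ} (hU : IsOpen U) (hV : IsOpen V) {f G : ℂ → ℂ}
    (hG : DifferentiableOn ℂ G V) (hmaps : Set.MapsTo f U V) (hG' : ∀ w ∈ V, deriv G w ≠ 0)
    (hf : ContDiffOn ℝ (⊤ : ℕ∞) f U) (hf' : ∀ z ∈ U, wd f z ≠ 0) :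
    ∀ z ∈ U, schwarz (fun z => G (f z)) z
      = schwarzD G (f z) * (wd f z) ^ 2 + schwarz f z := by
  have hf1 := wd_contDiffOn hU hf
  have hf2 := wd_contDiffOn hU hf1
  have hd1 := hG.deriv hV
  have hd2 := hd1.deriv hV
  have dG : ∀ z ∈ U, DifferentiableAt ℂ G (f z) :=
    fun z hz => hG.differentiableAt (hV.mem_nhds (hmaps hz))
  have dG1 : ∀ z ∈ U, DifferentiableAt ℂ (deriv G) (f z) :=
    fun z hz => hd1.differentiableAt (hV.mem_nhds (hmaps hz))
  have dG2 : ∀ z ∈ U, DifferentiableAt ℂ (deriv (deriv G)) (f z) :=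
    fun z hz => hd2.differentiableAt (hV.mem_nhds (hmaps hz))
  have df : ∀ z ∈ U, DifferentiableAt ℝ f z := fun z hz => hf.differentiableAt_real hU hz
  have df1 : ∀ z ∈ U, DifferentiableAt ℝ (wd f) z := fun z hz => hf1.differentiableAt_real hU hz
  have df2 : ∀ z ∈ U, DifferentiableAt ℝ (wd (wd f)) z :=
    fun z hz => hf2.differentiableAt_real hU hz
  have e1 : ∀ z ∈ U, wd (fun z => G (f z)) z = deriv G (f z) * wd f z :=
    fun z hz => wd_comp_left (df z hz) (dG z hz)
  have e2 : ∀ z ∈ U, wd (wd (fun z => G (f z))) z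
      = deriv (deriv G) (f z) * (wd f z * wd f z) + deriv G (f z) * wd (wd f) z := by
    intro z hz
    rw [wd_congr_s16 hU e1 z hz, wd_comp_left_mul (dG1 z hz) (df z hz) (df1 z hz)]
    ring
  have e3 : ∀ z ∈ U, wd (wd (wd (fun z => G (f z)))) z
      = deriv (deriv (deriv G)) (f z) * wd f z ^ 3
        + 3 * deriv (deriv G) (f z) * wd f z * wd (wd f) z
        + deriv G (f z) * wd (wd (wd f)) z := by
    intro z hz
    have hsq : DifferentiableAt ℝ (fun z => wd f z * wd f z) z := (df1 z hz).mul (df1 z hz)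
    rw [wd_congr_s16 hU e2 z hz,
      wd_add_s16 (u := fun z => deriv (deriv G) (f z) * (wd f z * wd f z))
        (v := fun z => deriv G (f z) * wd (wd f) z)
        ((((dG2 z hz).restrictScalars ℝ).comp z (df z hz)).mul hsq)
        ((((dG1 z hz).restrictScalars ℝ).comp z (df z hz)).mul (df2 z hz)),
      wd_comp_left_mul (c := fun z => wd f z * wd f z) (dG2 z hz) (df z hz) hsq,
      wd_comp_left_mul (dG1 z hz) (df z hz) (df2 z hz),
      wd_mul_s16 (df1 z hz) (df1 z hz)]
    ring
  intro z hz
  have n1 := hf' z hz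
  have n2 := hG' _ (hmaps hz)
  simp only [schwarz, schwarzD, e1 z hz, e2 z hz, e3 z hz]
  field_simp
  ring

end Wirtinger

/-- the push-forward densities `h̃ᵢ = hᵢ − {fᵢ,z}` satisfy
`h̃₂ − (h̃₁∘g)·(g')² = (S(G)∘f₂)·(∂f₂)²`: the push-forward of the projective
connection `h` transforms as a projective connection on the deformed surface. -/
theorem stmt16 (U U' V V' : Set ℂ)
    (hU : IsOpen U) (hU' : IsOpen U') (hV : IsOpen V) (hV' : IsOpen V')
    -- g : U → U' biholomorphism
    (g : ℂ → ℂ) (hg : DifferentiableOn ℂ g U) (hgbij : Set.BijOn g U U')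
    (hg' : ∀ z ∈ U, deriv g z ≠ 0)
    -- G : V → V' biholomorphism
    (G : ℂ → ℂ) (hG : DifferentiableOn ℂ G V) (hGbij : Set.BijOn G V V')
    (hG' : ∀ w ∈ V, deriv G w ≠ 0)
    -- the deformation maps f₂ : U → V and f₁ : U' → V'
    (f₁ f₂ : ℂ → ℂ)
    (hf₁ : ContDiffOn ℝ (⊤ : ℕ∞) f₁ U') (hf₁' : ∀ w ∈ U', wd f₁ w ≠ 0)
    (hf₂ : ContDiffOn ℝ (⊤ : ℕ∞) f₂ U) (hf₂' : ∀ z ∈ U, wd f₂ z ≠ 0)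
    (hf₂maps : Set.MapsTo f₂ U V)
    -- the intertwining relation f₁∘g = G∘f₂
    (hint : ∀ z ∈ U, f₁ (g z) = G (f₂ z))
    -- the projective connections
    (h₁ h₂ : ℂ → ℂ) (hh₁ : ContDiffOn ℝ (⊤ : ℕ∞) h₁ U')
    (hh₂ : ∀ z ∈ U, h₂ z = h₁ (g z) * (deriv g z)^2 + schwarzD g z) :
    ∀ z ∈ U,
      (h₂ z - schwarz f₂ z)
          - (h₁ (g z) - schwarz f₁ (g z)) * (deriv g z)^2
        = schwarzD G (f₂ z) * (wd f₂ z)^2 := by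
  intro z hz
  have h1 := schwarz_comp_right hU hU' hg hgbij.mapsTo hg' hf₁ hf₁' z hz
  have h2 := schwarz_comp_left hU hV hG hf₂maps hG' hf₂ hf₂' z hz
  have h3 := schwarz_congr hU (u := fun z => f₁ (g z)) (v := fun z => G (f₂ z)) hint z hz
  rw [hh₂ z hz]
  linear_combination h3 - h1 + h2
end
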